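/- Let X and Y be smooth projective varieties of dimension n over a field k, and let φ: X ⇢ Y be a birational isomorphism represented by an isomorphism U → V such that Z := X∖U has dimension at most n−1−ℓ and E := Y∖V is a Zariski-locally trivial ℙ^ℓ-bundle over Z for some ℓ ≥ 1. Then φ is convenient: [X∖U] − [Y∖V] lies in the image of multiplication by L : K_0(V_k^{(n−2)}) → K_0(V_k^{(n−1)}). -/

import Mathlib

open AlgebraicGeometry CategoryTheory CategoryTheory.Limits

noncomputable section

universe u

/-- A variety over a field `k`: a reduced separated scheme of finite type over `Spec k`. -/
structure Variety (k : Type u) [Field k] : Type (u + 1) where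
  /-- the underlying scheme -/
  toScheme : Scheme.{u}
  /-- the structure morphism to `Spec k` -/
  str : toScheme ⟶ Spec (CommRingCat.of k)
  reduced : IsReduced toScheme
  separated : IsSeparated str
  locallyOfFiniteType : LocallyOfFiniteType str
  quasiCompact : QuasiCompact str

namespace Variety

variable {k : Type u} [Field k]

/-- The dimension of a variety, i.e. the Krull dimension of its underlying space. -/
def dim (V : Variety k) : WithBot ℕ∞ := topologicalKrullDim V.toScheme

/-- `W` together with (implicitly) its two projections is a product of `X` and `Y`
over `k`, i.e. `W ≅ X ×ₖ Y`. -/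
def IsProductOf (W X Y : Variety k) : Prop :=
  ∃ e : W.toScheme ≅ Limits.pullback X.str Y.str,
    e.hom ≫ Limits.pullback.fst X.str Y.str ≫ X.str = W.str

/-- `A` is the affine line `𝔸¹` over `k`. -/
def IsAffLine (A : Variety k) : Prop :=
  ∃ e : A.toScheme ≅ Spec (CommRingCat.of (Polynomial k)),
    e.hom ≫ Spec.map (CommRingCat.ofHom (algebraMap k (Polynomial k))) = A.str

/-- `A` is affine `r`-space `𝔸^r` over `k`. -/
def IsAffSpace (r : ℕ) (A : Variety k) : Prop :=
  ∃ e : A.toScheme ≅ Spec (CommRingCat.of (MvPolynomial (Fin r) k)),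
    e.hom ≫ Spec.map (CommRingCat.ofHom (algebraMap k (MvPolynomial (Fin r) k))) = A.str

/-- A variety is smooth if its structure morphism is smooth. -/
def IsSmoothVar (V : Variety k) : Prop := IsSmooth V.str

/-- Projective `N`-space over `k`, as the `Proj` of a polynomial ring. -/
def ProjSpace (k : Type u) [Field k] (N : ℕ) : Scheme.{u} :=
  letI := MvPolynomial.gradedAlgebra (σ := Fin (N + 1)) (R := k)
  Proj (MvPolynomial.homogeneousSubmodule (Fin (N + 1)) k)

/-- The structure morphism of projective `N`-space over `k`. -/
def ProjSpace.str (k : Type u) [Field k] (N : ℕ) :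
    ProjSpace k N ⟶ Spec (CommRingCat.of k) :=
  letI := MvPolynomial.gradedAlgebra (σ := Fin (N + 1)) (R := k)
  Proj.toSpecZero (MvPolynomial.homogeneousSubmodule (Fin (N + 1)) k) ≫
    Spec.map (CommRingCat.ofHom
      (algebraMap k (MvPolynomial.homogeneousSubmodule (Fin (N + 1)) k 0)))

/-- `P` is projective `N`-space over `k`, as a variety. -/
def IsProjSpaceVar (N : ℕ) (P : Variety k) : Prop :=
  ∃ e : P.toScheme ≅ ProjSpace k N, e.hom ≫ ProjSpace.str k N = P.str

/-- A variety is projective if it admits a closed immersion into some `ℙ^N` over `k`. -/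
def IsProjectiveVar (V : Variety k) : Prop :=
  ∃ (N : ℕ) (i : V.toScheme ⟶ ProjSpace k N),
    IsClosedImmersion i ∧ i ≫ ProjSpace.str k N = V.str

/-- `X` and `Y` are birationally isomorphic over `k`:
some dense open subvarieties are isomorphic over `k`. -/
def BirEquiv (X Y : Variety k) : Prop :=
  ∃ (U : X.toScheme.Opens) (V : Y.toScheme.Opens),
    Dense (U : Set X.toScheme) ∧ Dense (V : Set Y.toScheme) ∧
    ∃ e : U.toScheme ≅ V.toScheme, e.hom ≫ V.ι ≫ Y.str = U.ι ≫ X.str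

/-- `X` and `Y` are stably birational: `X × 𝔸^r` and `Y × 𝔸^r` are birationally
isomorphic for some `r ≥ 0`. -/
def StablyBirational (X Y : Variety k) : Prop :=
  ∃ (r : ℕ) (A XA YA : Variety k),
    IsAffSpace r A ∧ IsProductOf XA X A ∧ IsProductOf YA Y A ∧ BirEquiv XA YA

/-- `X` and `Y` are piecewise isomorphic: they admit finite partitions into locally
closed subvarieties which are isomorphic over `k` piece by piece. -/
def PiecewiseIso (X Y : Variety k) : Prop :=
  ∃ (m : ℕ) (P Q : Fin m → Variety k)
    (f : ∀ i, (P i).toScheme ⟶ X.toScheme) (g : ∀ i, (Q i).toScheme ⟶ Y.toScheme),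
    (∀ i, IsImmersion (f i)) ∧ (∀ i, IsImmersion (g i)) ∧
    (∀ i, f i ≫ X.str = (P i).str) ∧ (∀ i, g i ≫ Y.str = (Q i).str) ∧
    (∀ i j, i ≠ j → Disjoint (Set.range (f i).base) (Set.range (f j).base)) ∧
    (∀ i j, i ≠ j → Disjoint (Set.range (g i).base) (Set.range (g j).base)) ∧
    (⋃ i, Set.range (f i).base) = Set.univ ∧
    (⋃ i, Set.range (g i).base) = Set.univ ∧
    ∀ i, ∃ e : (P i).toScheme ≅ (Q i).toScheme, e.hom ≫ (Q i).str = (P i).str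

/-- The set of generators of the scissor-type relations among varieties of the class `P`:
`[X] = [X']` for `X ≅ X'` over `k`, and `[X] = [Y] + [U]` whenever `Y` is a closed
subvariety of `X` and `U` is its open complement. -/
def cutRel (P : Variety k → Prop) : Set (FreeAbelianGroup {V : Variety k // P V}) :=
  {a | (∃ X Y : {V : Variety k // P V},
          (∃ e : X.1.toScheme ≅ Y.1.toScheme, e.hom ≫ Y.1.str = X.1.str) ∧
          a = FreeAbelianGroup.of X - FreeAbelianGroup.of Y) ∨
       (∃ (X Y U : {V : Variety k // P V}) (i : Y.1.toScheme ⟶ X.1.toScheme)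
          (j : U.1.toScheme ⟶ X.1.toScheme),
          IsClosedImmersion i ∧ IsOpenImmersion j ∧
          i ≫ X.1.str = Y.1.str ∧ j ≫ X.1.str = U.1.str ∧
          Set.range j.base = (Set.range i.base)ᶜ ∧
          a = FreeAbelianGroup.of X - FreeAbelianGroup.of Y - FreeAbelianGroup.of U)}

/-- The Grothendieck group of the class of varieties satisfying `P`: the free abelian
group on (isomorphism classes of) varieties satisfying `P`, modulo the relations
`[X] = [Y] + [X ∖ Y]` for closed subvarieties `Y` of `X`. -/
def K0 (k : Type u) [Field k] (P : Variety k → Prop) : Type (u + 1) :=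
  FreeAbelianGroup {V : Variety k // P V} ⧸ AddSubgroup.closure (cutRel P)

instance (P : Variety k → Prop) : AddCommGroup (K0 k P) :=
  QuotientAddGroup.Quotient.addCommGroup _

/-- The class of a variety in the Grothendieck group. -/
def K0.cls {P : Variety k → Prop} (V : Variety k) (hV : P V) : K0 k P :=
  QuotientAddGroup.mk (FreeAbelianGroup.of ⟨V, hV⟩)

/-- `K_0(V_k^{(n)})`: the Grothendieck group of varieties of dimension at most `n`. -/
abbrev K0le (k : Type u) [Field k] (n : ℕ) : Type (u + 1) :=
  K0 k (fun V => V.dim ≤ (n : WithBot ℕ∞))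

/-- `K_0[V_k]` (as an abelian group): the Grothendieck group of all varieties over `k`. -/
abbrev K0Var (k : Type u) [Field k] : Type (u + 1) := K0 k (fun _ => True)

/-- The class of a variety in `K_0[V_k]`. -/
def K0Var.cls (V : Variety k) : K0Var k := K0.cls V trivial

/-- `K_0(V_k^{(n,n-1)})`: the Grothendieck group of varieties of dimension at most `n`,
where moreover the class of every variety of dimension `< n` is set to `0`. -/
def K0graded (k : Type u) [Field k] (n : ℕ) : Type (u + 1) :=
  FreeAbelianGroup {V : Variety k // V.dim ≤ (n : WithBot ℕ∞)} ⧸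
    AddSubgroup.closure (cutRel (fun V => V.dim ≤ (n : WithBot ℕ∞)) ∪
      {a | ∃ X : {V : Variety k // V.dim ≤ (n : WithBot ℕ∞)},
        X.1.dim < (n : WithBot ℕ∞) ∧ a = FreeAbelianGroup.of X})

instance (n : ℕ) : AddCommGroup (K0graded k n) :=
  QuotientAddGroup.Quotient.addCommGroup _

/-- The class of a variety in `K_0(V_k^{(n,n-1)})`. -/
def K0graded.cls (n : ℕ) (V : Variety k) (hV : V.dim ≤ (n : WithBot ℕ∞)) : K0graded k n :=
  QuotientAddGroup.mk (FreeAbelianGroup.of ⟨V, hV⟩)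

/-- `x ∈ K_0(V_k^{(b)})` lies in the image of multiplication by `L = [𝔸¹]`, viewed as the
map `K_0(V_k^{(a)}) → K_0(V_k^{(b)})` sending `[Z]` to `[Z × 𝔸¹]`. -/
def InMulLImage (a b : ℕ) (x : K0le k b) : Prop :=
  ∃ (m : ℕ) (c : Fin m → ℤ) (Z W : Fin m → Variety k)
    (_ : ∀ i, (Z i).dim ≤ (a : WithBot ℕ∞)) (hW : ∀ i, (W i).dim ≤ (b : WithBot ℕ∞)),
    (∀ i, ∃ A : Variety k, IsAffLine A ∧ IsProductOf (W i) (Z i) A) ∧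
    x = ∑ i, c i • K0.cls (W i) (hW i)

/-- `L · χ = 0` in `K_0[V_k]`: there is a representation `χ = ∑ cᵢ [Zᵢ]` with
`∑ cᵢ [Zᵢ × 𝔸¹] = 0`. -/
def MulLZero (χ : K0Var k) : Prop :=
  ∃ (m : ℕ) (c : Fin m → ℤ) (Z W : Fin m → Variety k),
    (∀ i, ∃ A : Variety k, IsAffLine A ∧ IsProductOf (W i) (Z i) A) ∧
    χ = ∑ i, c i • K0Var.cls (Z i) ∧
    (0 : K0Var k) = ∑ i, c i • K0Var.cls (W i)

/-- The subgroup of `K_0[V_k]` of multiples of `L`, i.e. the ideal generated by `L`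
viewed as an additive subgroup. -/
def LMultiples (k : Type u) [Field k] : AddSubgroup (K0Var k) :=
  AddSubgroup.closure
    {y | ∃ (m : ℕ) (c : Fin m → ℤ) (Z W : Fin m → Variety k),
      (∀ i, ∃ A : Variety k, IsAffLine A ∧ IsProductOf (W i) (Z i) A) ∧
      y = ∑ i, c i • K0Var.cls (W i)}

/-- `Z` realizes the closed complement `X ∖ U` of the open `U ⊆ X` as a variety. -/
def IsComplementOf (Z X : Variety k) (U : X.toScheme.Opens) : Prop :=
  ∃ i : Z.toScheme ⟶ X.toScheme, IsClosedImmersion i ∧ i ≫ X.str = Z.str ∧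
    Set.range i.base = (U : Set X.toScheme)ᶜ

/-- The birational isomorphism between `n`-dimensional varieties `X ⇢ Y` represented by
an isomorphism `U → V` of open subvarieties is convenient:
`[X ∖ U] - [Y ∖ V]` lies in the image of `·L : K_0(V_k^{(n-2)}) → K_0(V_k^{(n-1)})`. -/
def ConvenientRep (n : ℕ) (X Y : Variety k) (U : X.toScheme.Opens)
    (V : Y.toScheme.Opens) : Prop :=
  ∀ (ZX ZY : Variety k) (hZX : ZX.dim ≤ ((n - 1 : ℕ) : WithBot ℕ∞))
    (hZY : ZY.dim ≤ ((n - 1 : ℕ) : WithBot ℕ∞)),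
    IsComplementOf ZX X U → IsComplementOf ZY Y V →
    InMulLImage (n - 2) (n - 1) (K0.cls ZX hZX - K0.cls ZY hZY)

/-- A field `k` is convenient if every birational isomorphism between smooth projective
varieties over `k` is convenient. -/
def ConvenientField (k : Type u) [Field k] : Prop :=
  ∀ (n : ℕ) (X Y : Variety k), IsSmoothVar X → IsSmoothVar Y →
    IsProjectiveVar X → IsProjectiveVar Y →
    IrreducibleSpace X.toScheme → IrreducibleSpace Y.toScheme →
    X.dim = (n : WithBot ℕ∞) → Y.dim = (n : WithBot ℕ∞) →
    ∀ (U : X.toScheme.Opens) (V : Y.toScheme.Opens),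
      Dense (U : Set X.toScheme) → Dense (V : Set Y.toScheme) →
      ∀ e : U.toScheme ≅ V.toScheme, e.hom ≫ V.ι ≫ Y.str = U.ι ≫ X.str →
      ConvenientRep n X Y U V

end Variety
namespace Variety

variable {k : Type u} [Field k]

/-- The type of birational isomorphism classes of irreducible `n`-dimensional
varieties over `k` (the set `B_n`). -/
def BirClass (k : Type u) [Field k] (n : ℕ) : Type (u + 1) :=
  Quot (fun X Y : {V : Variety k // IrreducibleSpace V.toScheme ∧
    V.dim = (n : WithBot ℕ∞)} => BirEquiv X.1 Y.1)

/-- The type of stable birational isomorphism classes of irreducible varieties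
over `k` (the set `SB`). -/
def StableBirClass (k : Type u) [Field k] : Type (u + 1) :=
  Quot (fun X Y : {V : Variety k // IrreducibleSpace V.toScheme} =>
    StablyBirational X.1 Y.1)

/-- The family of varieties `C` together with the closed immersions `f i` realizes
exactly the `n`-dimensional irreducible components of `X`, each exactly once. -/
def RealizesComponents (n : ℕ) (X : Variety k) (m : ℕ)
    (C : Fin m → Variety k) (f : ∀ i, (C i).toScheme ⟶ X.toScheme) : Prop :=
  (∀ i, IsClosedImmersion (f i)) ∧ (∀ i, f i ≫ X.str = (C i).str) ∧
  Function.Injective (fun i => Set.range (f i).base) ∧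
  (Set.range fun i => Set.range (f i).base) =
    {S | S ∈ irreducibleComponents X.toScheme ∧
      topologicalKrullDim S = (n : WithBot ℕ∞)}

/-- `p : E ⟶ Z` is a Zariski-locally trivial `ℙ^ℓ`-bundle: every point of `Z` has an
open neighbourhood `W` such that `p⁻¹(W)` is isomorphic over `W` to `W × ℙ^ℓ`. -/
def IsProjBundle (ℓ : ℕ) {E Z : Variety k} (p : E.toScheme ⟶ Z.toScheme) : Prop :=
  ∀ z : Z.toScheme, ∃ W : Z.toScheme.Opens, z ∈ W ∧
    ∃ e : (p ⁻¹ᵁ W).toScheme ≅ Limits.pullback (W.ι ≫ Z.str) (ProjSpace.str k ℓ),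
      e.hom ≫ Limits.pullback.fst (W.ι ≫ Z.str) (ProjSpace.str k ℓ) = p ∣_ W

/-- `X` (of dimension `d`) has stable dimensional complexity `m`: `m` is the minimal
integer such that `X` is stably birational to `X' × 𝔸^(d-m)` for some variety `X'` of
dimension `m`. -/
def HasStableDimComplexity (X : Variety k) (d m : ℕ) : Prop :=
  (∃ X' A P : Variety k, X'.dim = (m : WithBot ℕ∞) ∧ IsAffSpace (d - m) A ∧
      IsProductOf P X' A ∧ StablyBirational X P) ∧
  ∀ j < m, ¬ ∃ X' A P : Variety k, X'.dim = (j : WithBot ℕ∞) ∧ IsAffSpace (d - j) A ∧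
      IsProductOf P X' A ∧ StablyBirational X P

/-- Generators of the covering relations among smooth varieties: `[X] = ∑ᵢ [Xᵢ]`
whenever `{Xᵢ → X}` is a finite family of locally closed embeddings of smooth
varieties with pairwise disjoint images whose union is all of `X`. -/
def smCutRel (k : Type u) [Field k] :
    Set (FreeAbelianGroup {V : Variety k // IsSmoothVar V}) :=
  {a | ∃ (X : {V : Variety k // IsSmoothVar V}) (m : ℕ)
        (P : Fin m → {V : Variety k // IsSmoothVar V})
        (f : ∀ i, (P i).1.toScheme ⟶ X.1.toScheme),
        (∀ i, IsImmersion (f i)) ∧ (∀ i, f i ≫ X.1.str = (P i).1.str) ∧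
        (∀ i j, i ≠ j → Disjoint (Set.range (f i).base) (Set.range (f j).base)) ∧
        (⋃ i, Set.range (f i).base) = Set.univ ∧
        a = FreeAbelianGroup.of X - ∑ i, FreeAbelianGroup.of (P i)}

/-- `K_0(V_k^{sm})`: the Grothendieck group of smooth varieties over `k`, with the
covering relations. -/
def K0sm (k : Type u) [Field k] : Type (u + 1) :=
  FreeAbelianGroup {V : Variety k // IsSmoothVar V} ⧸ AddSubgroup.closure (smCutRel k)

instance : AddCommGroup (K0sm k) := QuotientAddGroup.Quotient.addCommGroup _

/-- The class of a smooth variety in `K_0(V_k^{sm})`. -/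
def K0sm.cls (V : Variety k) (hV : IsSmoothVar V) : K0sm k :=
  QuotientAddGroup.mk (FreeAbelianGroup.of ⟨V, hV⟩)

end Variety
namespace Variety

variable {k : Type u} [Field k]

/-- The class of a variety in `K_0(V_k^{(n)})`. -/
def K0le.cls (n : ℕ) (V : Variety k) (hV : V.dim ≤ (n : WithBot ℕ∞)) : K0le k n :=
  K0.cls V hV

end Variety

open Variety

namespace ConvAux

variable {k : Type u} [Field k]

instance (V : Variety k) : IsReduced V.toScheme := V.reduced
instance (V : Variety k) : IsSeparated V.str := V.separated
instance (V : Variety k) : LocallyOfFiniteType V.str := V.locallyOfFiniteType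
instance (V : Variety k) : QuasiCompact V.str := V.quasiCompact

instance (V : Variety k) : IsLocallyNoetherian V.toScheme :=
  have : IsLocallyNoetherian (Spec (CommRingCat.of k)) := inferInstance
  LocallyOfFiniteType.isLocallyNoetherian V.str

instance (V : Variety k) : CompactSpace V.toScheme :=
  QuasiCompact.compactSpace_of_compactSpace V.str

/-- Open subvariety. -/
abbrev res (X : Variety k) (O : X.toScheme.Opens) : Variety k where
  toScheme := O.toScheme
  str := O.ι ≫ X.str
  reduced := inferInstance
  separated := inferInstance
  locallyOfFiniteType := inferInstance
  quasiCompact := inferInstance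

theorem dim_le_of_immersion {X Y : Variety k} (i : X.toScheme ⟶ Y.toScheme) [IsImmersion i] :
    X.dim ≤ Y.dim :=
  i.isEmbedding.isInducing.topologicalKrullDim_le

theorem res_dim {X : Variety k} {N : ℕ} (hX : X.dim ≤ (N : WithBot ℕ∞)) (O : X.toScheme.Opens) :
    (res X O).dim ≤ (N : WithBot ℕ∞) :=
  le_trans (dim_le_of_immersion (X := res X O) (Y := X) O.ι) hX

theorem cls_iso {N : ℕ} {X Y : Variety k} (hX : X.dim ≤ (N : WithBot ℕ∞))
    (hY : Y.dim ≤ (N : WithBot ℕ∞)) (e : X.toScheme ≅ Y.toScheme) (he : e.hom ≫ Y.str = X.str) :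
    K0le.cls N X hX = K0le.cls N Y hY := by
  refine (QuotientAddGroup.eq_iff_sub_mem).2 ?_
  exact AddSubgroup.subset_closure (Or.inl ⟨⟨X, hX⟩, ⟨Y, hY⟩, ⟨e, he⟩, rfl⟩)

theorem cls_cut {N : ℕ} {X Y U : Variety k} (hX : X.dim ≤ (N : WithBot ℕ∞))
    (hY : Y.dim ≤ (N : WithBot ℕ∞)) (hU : U.dim ≤ (N : WithBot ℕ∞))
    (i : Y.toScheme ⟶ X.toScheme) (j : U.toScheme ⟶ X.toScheme)
    (hi : IsClosedImmersion i) (hj : IsOpenImmersion j)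
    (hi' : i ≫ X.str = Y.str) (hj' : j ≫ X.str = U.str)
    (hij : Set.range j = (Set.range i)ᶜ) :
    K0le.cls N X hX = K0le.cls N U hU + K0le.cls N Y hY := by
  have : (QuotientAddGroup.mk (FreeAbelianGroup.of (⟨X, hX⟩ : {V : Variety k // V.dim ≤ (N : WithBot ℕ∞)})
      - FreeAbelianGroup.of ⟨Y, hY⟩ - FreeAbelianGroup.of ⟨U, hU⟩) : K0le k N) = 0 := by
    refine (QuotientAddGroup.eq_zero_iff _).2 ?_
    exact AddSubgroup.subset_closure
      (Or.inr ⟨⟨X, hX⟩, ⟨Y, hY⟩, ⟨U, hU⟩, i, j, hi, hj, hi', hj', hij, rfl⟩)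
  have h2 : K0le.cls N X hX - K0le.cls N Y hY - K0le.cls N U hU = 0 := this
  rw [sub_sub, sub_eq_zero] at h2
  rw [h2, add_comm]

theorem cls_empty {N : ℕ} {X : Variety k} (hX : X.dim ≤ (N : WithBot ℕ∞))
    (h : IsEmpty X.toScheme) : K0le.cls N X hX = 0 := by
  have := cls_cut hX hX hX (𝟙 _) (𝟙 _) inferInstance inferInstance (by simp) (by simp)
    (by ext x; exact h.elim x)
  simpa using this

/-- Class of an open subvariety. -/
def oc {N : ℕ} {X : Variety k} (hX : X.dim ≤ (N : WithBot ℕ∞)) (O : X.toScheme.Opens) : K0le k N :=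
  K0le.cls N (res X O) (res_dim hX O)

theorem oc_top {N : ℕ} {X : Variety k} (hX : X.dim ≤ (N : WithBot ℕ∞)) :
    oc hX ⊤ = K0le.cls N X hX :=
  cls_iso (X := res X ⊤) _ _ X.toScheme.topIso (by simp [res])

theorem oc_bot {N : ℕ} {X : Variety k} (hX : X.dim ≤ (N : WithBot ℕ∞)) :
    oc hX ⊥ = 0 :=
  cls_empty (X := res X ⊥) _ ⟨fun x => x.2⟩

/-- Scissor relation for an immersion whose image is a difference of two opens. -/
theorem oc_cut {N : ℕ} {X C : Variety k} (hX : X.dim ≤ (N : WithBot ℕ∞))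
    (hC : C.dim ≤ (N : WithBot ℕ∞)) {O W : X.toScheme.Opens} (hOW : O ≤ W)
    (i : C.toScheme ⟶ X.toScheme) [IsImmersion i] (hi : i ≫ X.str = C.str)
    (hr : Set.range i = (W : Set X.toScheme) \ O) :
    oc hX W = oc hX O + K0le.cls N C hC := by
  have hiW : Set.range i ⊆ Set.range W.ι := by
    rw [hr, Scheme.Opens.range_ι]; exact Set.sdiff_subset
  let i' : C.toScheme ⟶ W.toScheme := IsOpenImmersion.lift W.ι i hiW
  have hfac : i' ≫ W.ι = i := IsOpenImmersion.lift_fac _ _ _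
  have : IsImmersion (i' ≫ W.ι) := by rw [hfac]; infer_instance
  have : IsImmersion i' := IsImmersion.of_comp i' W.ι
  have hr' : Set.range i' = W.ι ⁻¹' (O : Set X.toScheme)ᶜ := by
    have : Set.range i = W.ι '' Set.range i' := by
      rw [← hfac]; simp [Set.range_comp]
    rw [← Set.preimage_image_eq (Set.range i') W.ι.isOpenEmbedding.injective, ← this, hr]
    ext x
    simp only [Set.mem_preimage, Set.mem_sdiff, Set.mem_compl_iff, and_iff_right_iff_imp]
    exact fun _ => x.2
  have hcl : IsClosed (Set.range i') := by
    rw [hr']; exact O.2.isClosed_compl.preimage W.ι.continuous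
  have : IsClosedImmersion i' := IsClosedImmersion.of_isPreimmersion _ hcl
  refine cls_cut (X := res X W) (U := res X O) (Y := C) _ _ _ i' (X.toScheme.homOfLE hOW) this
    inferInstance ?_ ?_ ?_
  · simp only [res]; rw [← Category.assoc, hfac, hi]
  · simp [res]
  · rw [hr']
    rw [← Set.preimage_image_eq (Set.range (X.toScheme.homOfLE hOW)) W.ι.isOpenEmbedding.injective]
    have : W.ι '' Set.range (X.toScheme.homOfLE hOW) = O := by
      rw [← Set.range_comp]
      have := Scheme.homOfLE_ι X.toScheme hOW
      rw [← Scheme.Opens.range_ι O, ← this]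
      rfl
    rw [this, Set.preimage_compl, compl_compl]

instance reducedClosed {X : Scheme.{u}} (Z : TopologicalSpace.Closeds X) :
    IsReduced (Scheme.IdealSheafData.vanishingIdeal Z).subscheme := by
  set I := Scheme.IdealSheafData.vanishingIdeal Z with hI
  have : ∀ i, IsReduced (I.subschemeCover.openCover.X i) := by
    intro (U : X.affineOpens)
    have : _root_.IsReduced (Γ(X, U) ⧸ I.ideal U) := by
      rw [← Ideal.isRadical_iff_quotient_reduced, hI, Scheme.IdealSheafData.vanishingIdeal_ideal]
      exact PrimeSpectrum.isRadical_vanishingIdeal _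
    exact inferInstanceAs (IsReduced (Spec (.of (Γ(X, U) ⧸ I.ideal U))))
  exact IsReduced.of_openCover _ I.subschemeCover.openCover

theorem oc_mv {N : ℕ} {X : Variety k} (hX : X.dim ≤ (N : WithBot ℕ∞)) (O W : X.toScheme.Opens) :
    oc hX (O ⊔ W) = oc hX O + oc hX W - oc hX (O ⊓ W) := by
  let Z : TopologicalSpace.Closeds X.toScheme := ⟨(O : Set X.toScheme)ᶜ, O.2.isClosed_compl⟩
  let I := Scheme.IdealSheafData.vanishingIdeal Z
  have : IsReduced I.subscheme := reducedClosed Z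
  let C0 : Scheme := (I.subschemeι ⁻¹ᵁ W).toScheme
  let i : C0 ⟶ X.toScheme := (I.subschemeι ⁻¹ᵁ W).ι ≫ I.subschemeι
  have hLN : IsLocallyNoetherian I.subscheme := LocallyOfFiniteType.isLocallyNoetherian I.subschemeι
  let C : Variety k :=
    { toScheme := C0
      str := i ≫ X.str
      reduced := inferInstance
      separated := inferInstance
      locallyOfFiniteType := inferInstance
      quasiCompact := inferInstance }
  have : IsImmersion i := inferInstance
  have hC : C.dim ≤ (N : WithBot ℕ∞) := le_trans (dim_le_of_immersion (X := C) (Y := X) i) hX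
  have hr : Set.range i = (W : Set X.toScheme) \ O := by
    have h1 : Set.range I.subschemeι = (O : Set X.toScheme)ᶜ := by
      rw [Scheme.IdealSheafData.range_subschemeι, Scheme.IdealSheafData.coe_support_vanishingIdeal]
      rfl
    have h2 : Set.range i = I.subschemeι '' (I.subschemeι ⁻¹' W) := by
      simp only [i, Scheme.Hom.comp_base, TopCat.hom_comp, ContinuousMap.coe_comp, Set.range_comp]
      rw [Scheme.Opens.range_ι]; rfl
    rw [h2, Set.image_preimage_eq_inter_range, h1]; rfl
  have e1 := oc_cut hX hC (O := O) (W := O ⊔ W) le_sup_left i rfl (by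
    rw [hr]; ext x; simp)
  have e2 := oc_cut hX hC (O := O ⊓ W) (W := W) inf_le_right i rfl (by
    rw [hr]; ext x; simp)
  rw [e1, e2]; abel

/-- The image of multiplication by `L` is a subgroup. -/
def LI (k : Type u) [Field k] (a b : ℕ) : AddSubgroup (K0le k b) :=
  AddSubgroup.closure {x | ∃ (Z W : Variety k) (_ : Z.dim ≤ (a : WithBot ℕ∞))
    (hW : W.dim ≤ (b : WithBot ℕ∞)),
    (∃ A : Variety k, IsAffLine A ∧ IsProductOf W Z A) ∧ x = K0.cls W hW}

theorem inMulLImage_of_mem {a b : ℕ} {x : K0le k b} (h : x ∈ LI k a b) : InMulLImage a b x := by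
  induction h using AddSubgroup.closure_induction with
  | mem x hx =>
    obtain ⟨Z, W, hZ, hW, hA, rfl⟩ := hx
    exact ⟨1, fun _ => 1, fun _ => Z, fun _ => W, fun _ => hZ, fun _ => hW, fun _ => hA, by simp⟩
  | zero => exact ⟨0, Fin.elim0, Fin.elim0, Fin.elim0, fun i => i.elim0, fun i => i.elim0,
      fun i => i.elim0, by simp⟩
  | add x y _ _ hx hy =>
    obtain ⟨m, c, Z, W, hZ, hW, hA, rfl⟩ := hx
    obtain ⟨m', c', Z', W', hZ', hW', hA', rfl⟩ := hy
    refine ⟨m + m', Fin.append c c', Fin.append Z Z', Fin.append W W', ?_, ?_, ?_, ?_⟩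
    · intro i; refine Fin.addCases (fun i => ?_) (fun i => ?_) i
      · simpa using hZ i
      · simpa using hZ' i
    · intro i; refine Fin.addCases (fun i => ?_) (fun i => ?_) i
      · simpa using hW i
      · simpa using hW' i
    · intro i; refine Fin.addCases (fun i => ?_) (fun i => ?_) i
      · simpa using hA i
      · simpa using hA' i
    · rw [Fin.sum_univ_add]
      congr 1 <;> refine Finset.sum_congr rfl fun i _ => ?_
      · simp
      · simp
  | neg x _ hx =>
    obtain ⟨m, c, Z, W, hZ, hW, hA, rfl⟩ := hx
    exact ⟨m, fun i => - c i, Z, W, hZ, hW, hA, by simp⟩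

end ConvAux

namespace ConvAux

variable {k : Type u} [Field k]

/-- structure map of the affine line -/
abbrev lineStr (k : Type u) [Field k] :
    Spec (CommRingCat.of (Polynomial k)) ⟶ Spec (CommRingCat.of k) :=
  Spec.map (CommRingCat.ofHom (algebraMap k (Polynomial k)))

/-- structure map of affine space -/
abbrev affStr (k : Type u) [Field k] (m : ℕ) :
    Spec (CommRingCat.of (MvPolynomial (Fin m) k)) ⟶ Spec (CommRingCat.of k) :=
  Spec.map (CommRingCat.ofHom (algebraMap k (MvPolynomial (Fin m) k)))

instance : LocallyOfFiniteType (lineStr k) := by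
  rw [HasRingHomProperty.Spec_iff (P := @LocallyOfFiniteType)]
  exact RingHom.finiteType_algebraMap.2 inferInstance

/-- The affine line as a variety. -/
abbrev line (k : Type u) [Field k] : Variety k where
  toScheme := Spec (CommRingCat.of (Polynomial k))
  str := lineStr k
  reduced := inferInstance
  separated := inferInstance
  locallyOfFiniteType := inferInstance
  quasiCompact := inferInstance

theorem isAffLine_line : IsAffLine (line k) := ⟨Iso.refl _, by simp⟩

section
attribute [local instance] Polynomial.algebra

theorem line_pb (R : Type u) [CommRing R] [Algebra k R] :
    ∃ d : Spec (CommRingCat.of (Polynomial R)) ⟶ Spec (CommRingCat.of (Polynomial k)),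
    IsPullback (Spec.map (CommRingCat.ofHom (algebraMap R (Polynomial R)))) d
      (Spec.map (CommRingCat.ofHom (algebraMap k R))) (lineStr k) :=
  ⟨_, isPullback_SpecMap_of_isPushout _ _ _ _
    (CommRingCat.isPushout_of_isPushout k R (Polynomial k) (Polynomial R))⟩

end

theorem line_chart {T : Scheme.{u}} (s : T ⟶ Spec (CommRingCat.of k)) (R : CommRingCat.{u})
    (j : Spec R ⟶ T) :
    ∃ g : Spec (CommRingCat.of (Polynomial R)) ⟶ pullback s (lineStr k),
      IsPullback g (Spec.map (CommRingCat.ofHom (algebraMap R (Polynomial R))))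
        (pullback.fst s (lineStr k)) j := by
  obtain ⟨φ, hφ⟩ := Spec.map_surjective (j ≫ s)
  let _ : Algebra k R := φ.hom.toAlgebra
  obtain ⟨d, h2⟩ := line_pb (k := k) R
  have h3 := IsPullback.of_hasPullback s (lineStr k)
  have e1 : Spec.map (CommRingCat.ofHom (algebraMap k R)) = j ≫ s := by
    rw [← hφ]; rfl
  rw [e1] at h2
  exact ⟨_, (IsPullback.of_right' h2.flip h3.flip)⟩

theorem line_reduced {T : Scheme.{u}} [IsReduced T] (s : T ⟶ Spec (CommRingCat.of k)) :
    IsReduced (pullback s (lineStr k)) := by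
  let 𝒰 := T.affineCover.pullback₁ (pullback.fst s (lineStr k))
  have : ∀ i, IsReduced (𝒰.X i) := by
    intro (i : T.affineCover.I₀)
    obtain ⟨R, hR⟩ : ∃ R, T.affineCover.X i = Spec R := ⟨_, rfl⟩
    let j : Spec R ⟶ T := eqToHom hR.symm ≫ T.affineCover.f i
    have hred : IsReduced (Spec R) := isReduced_of_isOpenImmersion j
    have : _root_.IsReduced R := (affine_isReduced_iff R).1 hred
    obtain ⟨g, hg⟩ := line_chart s R j
    have hp : IsPullback (pullback.fst (pullback.fst s (lineStr k)) (T.affineCover.f i))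
        (pullback.snd _ _ ≫ eqToHom hR) (pullback.fst s (lineStr k)) j := by
      refine (IsPullback.of_hasPullback _ _).of_iso (Iso.refl _) (Iso.refl _) (eqToIso hR)
        (Iso.refl _) ?_ ?_ ?_ ?_ <;> simp [j]
    let e := hp.isoIsPullback _ _ hg
    have h0 : _root_.IsReduced (Polynomial R) := ⟨fun f hf => by
      ext n
      simpa using (Polynomial.isNilpotent_iff.1 hf n).eq_zero⟩
    have : IsReduced (Spec (CommRingCat.of (Polynomial R))) :=
      (affine_isReduced_iff (CommRingCat.of (Polynomial R))).2 h0
    have he : IsOpenImmersion e.hom := IsOpenImmersion.of_isIso _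
    have hh := isReduced_of_isOpenImmersion e.hom
    exact hh
  exact IsReduced.of_openCover _ 𝒰

/-- Product with the affine line. -/
abbrev prodLine (T : Variety k) : Variety k where
  toScheme := pullback T.str (lineStr k)
  str := pullback.fst T.str (lineStr k) ≫ T.str
  reduced := line_reduced _
  separated := inferInstance
  locallyOfFiniteType := inferInstance
  quasiCompact := inferInstance

theorem isProductOf_prodLine (T : Variety k) : IsProductOf (prodLine T) T (line k) :=
  ⟨Iso.refl _, by simp⟩

open TopologicalSpace in
theorem exists_chart_dim {T : Scheme.{u}} {d : ℕ} (h : (d : WithBot ℕ∞) ≤ topologicalKrullDim T) :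
    ∃ (R : CommRingCat.{u}) (j : Spec R ⟶ T), IsOpenImmersion j ∧
      (d : WithBot ℕ∞) ≤ ringKrullDim R := by
  obtain ⟨p, rfl⟩ := Order.le_krullDim_iff.1 h
  obtain ⟨x, hx⟩ := p.head.isIrreducible'.nonempty
  obtain ⟨R, j, hj, hxj⟩ : ∃ (R : CommRingCat.{u}) (j : Spec R ⟶ T), IsOpenImmersion j ∧
      x ∈ Set.range j := ⟨_, _, T.affineCover.map_prop _, T.affineCover.covers x⟩
  refine ⟨R, j, hj, ?_⟩
  obtain ⟨y, rfl⟩ := hxj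
  rw [← PrimeSpectrum.topologicalKrullDim_eq_ringKrullDim]
  refine Order.le_krullDim_iff.2 ?_
  have hmem : ∀ i, j y ∈ (p i).carrier := fun i => (p.head_le i : _) hx
  have hemb := j.isOpenEmbedding
  let q : Fin (p.length + 1) → IrreducibleCloseds (PrimeSpectrum R) := fun i =>
    ⟨j ⁻¹' (p i).carrier, ⟨⟨y, hmem i⟩, (p i).isIrreducible'.isPreirreducible.preimage hemb⟩,
      (p i).isClosed'.preimage hemb.continuous⟩
  have key : ∀ a b, q a ≤ q b → p a ≤ p b := by
    intro a b hab
    have h1 : (p a).carrier ∩ Set.range j ⊆ (p b).carrier := by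
      rintro _ ⟨ha, z, rfl⟩
      exact hab ha
    have h2 := subset_closure_inter_of_isPreirreducible_of_isOpen
      (p a).isIrreducible'.isPreirreducible hemb.isOpen_range ⟨j y, hmem a, y, rfl⟩
    exact h2.trans ((p b).isClosed'.closure_subset_iff.2 h1)
  have hq : StrictMono q := by
    intro a b hab
    refine lt_of_le_not_ge ?_ fun hba => ?_
    · exact fun z hz => (p.strictMono hab).le hz
    · exact absurd (key _ _ hba) (not_le_of_gt (p.strictMono hab))
  exact ⟨LTSeries.mk p.length q hq, rfl⟩

theorem dim_prodLine (T : Variety k) {N : ℕ} (h : (prodLine T).dim ≤ (N : WithBot ℕ∞)) :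
    T.dim ≤ ((N - 1 : ℕ) : WithBot ℕ∞) := by
  by_contra hc
  have hd : ((N - 1 + 1 : ℕ) : WithBot ℕ∞) ≤ topologicalKrullDim T.toScheme := by
    have hc' := not_le.1 hc
    unfold Variety.dim at hc'
    generalize topologicalKrullDim T.toScheme = D at hc'
    induction D with
    | bot => simp at hc'
    | coe D =>
      induction D using ENat.recTopCoe with
      | top => exact WithBot.coe_le_coe.2 le_top
      | coe D =>
        have : N - 1 < D := by
          have h1 : ((N - 1 : ℕ) : ℕ∞) < (D : ℕ∞) := WithBot.coe_lt_coe.1 hc'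
          exact_mod_cast h1
        have h2 : ((N - 1 + 1 : ℕ) : ℕ∞) ≤ (D : ℕ∞) := by exact_mod_cast this
        exact WithBot.coe_le_coe.2 h2
  obtain ⟨R, j, hj, hR⟩ := exists_chart_dim hd
  obtain ⟨g, hg⟩ := line_chart T.str R j
  have : IsOpenImmersion g := MorphismProperty.of_isPullback (P := @IsOpenImmersion) hg.flip hj
  have h1 := (g.isOpenEmbedding.isInducing).topologicalKrullDim_le
  have h2 := PrimeSpectrum.topologicalKrullDim_eq_ringKrullDim (R := Polynomial R)
  have h3 := ringKrullDim_succ_le_ringKrullDim_polynomial (R := R)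
  have h4 : ringKrullDim R + 1 ≤ (N : WithBot ℕ∞) := by
    refine h3.trans (le_trans ?_ h)
    rw [← h2]; exact h1
  have h5 : ((N - 1 + 1 : ℕ) : WithBot ℕ∞) + 1 ≤ (N : WithBot ℕ∞) := le_trans (by gcongr) h4
  have h6 : N - 1 + 1 + 1 ≤ N := by exact_mod_cast h5
  omega

/-- `T × 𝔸^m`. -/
def tower (T : Variety k) : ℕ → Variety k
  | 0 => T
  | m + 1 => prodLine (tower T m)

theorem aff_succ (m : ℕ) :
    ∃ c d, IsPullback c d (affStr k m) (lineStr k) ∧ c ≫ affStr k m = affStr k (m + 1) := by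
  obtain ⟨d, h2⟩ := line_pb (k := k) (MvPolynomial (Fin m) k)
  let e := (MvPolynomial.finSuccEquiv k m)
  let e' : Spec (CommRingCat.of (Polynomial (MvPolynomial (Fin m) k))) ≅
    Spec (CommRingCat.of (MvPolynomial (Fin (m + 1)) k)) :=
    Scheme.Spec.mapIso (e.toRingEquiv.toCommRingCatIso).op
  refine ⟨e'.inv ≫ Spec.map (CommRingCat.ofHom (algebraMap _ _)), e'.inv ≫ d,
    h2.of_iso e' (Iso.refl _) (Iso.refl _) (Iso.refl _)
    (by simp) (by simp) (by simp; rfl) (by simp), ?_⟩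
  have : e'.inv = Spec.map (CommRingCat.ofHom (e.symm : _ →+* MvPolynomial (Fin (m + 1)) k)) := rfl
  rw [this, affStr, ← Spec.map_comp, ← Spec.map_comp]
  congr 1
  refine CommRingCat.hom_ext (RingHom.ext fun x => ?_)
  change e.symm (algebraMap _ _ (algebraMap k (MvPolynomial (Fin m) k) x)) = _
  rw [← IsScalarTower.algebraMap_apply]
  exact e.symm.commutes x

theorem tower_pb (T : Variety k) (m : ℕ) :
    ∃ (a : (tower T m).toScheme ⟶ T.toScheme) (b : (tower T m).toScheme ⟶ _),
      IsPullback a b T.str (affStr k m) ∧ a ≫ T.str = (tower T m).str := by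
  induction m with
  | zero =>
    have : IsIso (affStr k 0) := by
      have : IsIso (CommRingCat.ofHom (algebraMap k (MvPolynomial (Fin 0) k))) := by
        rw [ConcreteCategory.isIso_iff_bijective]
        exact ((MvPolynomial.isEmptyAlgEquiv k (Fin 0)).symm.bijective)
      infer_instance
    change ∃ (a : T.toScheme ⟶ T.toScheme) (b : T.toScheme ⟶ _),
      IsPullback a b T.str (affStr k 0) ∧ a ≫ T.str = T.str
    refine ⟨𝟙 _, T.str ≫ inv (affStr k 0), ?_, by simp⟩
    exact IsPullback.of_horiz_isIso ⟨by simp⟩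
  | succ m ih =>
    obtain ⟨a, b, hab, hs⟩ := ih
    obtain ⟨c, d, hcd, hc⟩ := aff_succ (k := k) m
    have h1 : IsPullback (pullback.fst (tower T m).str (lineStr k))
      (pullback.snd (tower T m).str (lineStr k)) (b ≫ affStr k m) (lineStr k) := by
      rw [← hab.w, hs]; exact IsPullback.of_hasPullback _ _
    have h2 := IsPullback.of_right' h1.flip hcd.flip
    have h3 := h2.flip.paste_horiz hab
    rw [hc] at h3
    exact ⟨pullback.fst (tower T m).str (lineStr k) ≫ a, _, h3, by simp [hs, tower]⟩

end ConvAux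

namespace ConvAux

section strata

attribute [local instance] MvPolynomial.gradedAlgebra

variable {k : Type u} [Field k] {l : ℕ}

theorem hom_scale {σ S : Type*} [Fintype σ] [CommRing S] (g : k →+* S) (r : S) (y : σ → S)
    {a : MvPolynomial σ k} {n : ℕ} (ha : a.IsHomogeneous n) :
    MvPolynomial.eval₂Hom g (fun i => r * y i) a = r ^ n * MvPolynomial.eval₂Hom g y a := by
  simp only [MvPolynomial.coe_eval₂Hom, MvPolynomial.eval₂_eq', Finset.mul_sum]
  refine Finset.sum_congr rfl fun d hd => ?_
  have hdn : ∑ i, d i = n := by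
    have := ha.degree_eq_sum_deg_support hd
    rw [this]
    exact (Finset.sum_subset (Finset.subset_univ _) (by simp)).symm
  simp only [mul_pow, Finset.prod_mul_distrib, Finset.prod_pow_eq_pow_sum, hdn]
  ring

/-- the grading -/
abbrev gr (k : Type u) [Field k] (l : ℕ) : ℕ → Submodule k (MvPolynomial (Fin (l + 1)) k) :=
  MvPolynomial.homogeneousSubmodule (Fin (l + 1)) k

theorem X_mem (i : Fin (l + 1)) : (MvPolynomial.X i : MvPolynomial (Fin (l + 1)) k) ∈ gr k l 1 :=
  MvPolynomial.isHomogeneous_X _ _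

/-- degree zero part of the localization at a variable -/
abbrev AwR (k : Type u) [Field k] (l : ℕ) (m : Fin (l + 1)) : Type u :=
  HomogeneousLocalization.Away (gr k l) (MvPolynomial.X m : MvPolynomial (Fin (l + 1)) k)

/-- coordinates -/
def uu (m i : Fin (l + 1)) : AwR k l m :=
  HomogeneousLocalization.Away.mk (gr k l) (X_mem m) 1 (MvPolynomial.X i) (X_mem i)

/-- constants -/
def cc (m : Fin (l + 1)) : k →+* AwR k l m :=
  (HomogeneousLocalization.fromZeroRingHom (gr k l) _).comp (algebraMap k (gr k l 0))

/-- dehomogenization point -/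
def vv (m i : Fin (l + 1)) : MvPolynomial (Fin m) k :=
  if h : i < m then MvPolynomial.X ⟨i, h⟩ else if i = m then 1 else 0

/-- dehomogenization -/
def psi0 (m : Fin (l + 1)) : MvPolynomial (Fin (l + 1)) k →+* MvPolynomial (Fin m) k :=
  MvPolynomial.eval₂Hom MvPolynomial.C (vv m)

theorem psi0_X (m : Fin (l + 1)) : psi0 (k := k) m (MvPolynomial.X m) = 1 := by
  simp [psi0, vv]

/-- restriction to the stratum -/
def psi (m : Fin (l + 1)) : AwR k l m →+* MvPolynomial (Fin m) k :=
  (IsLocalization.Away.lift (S := Localization.Away (MvPolynomial.X m : MvPolynomial (Fin (l + 1)) k))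
    (MvPolynomial.X m) (g := psi0 m) (by rw [psi0_X]; exact isUnit_one)).comp
  (algebraMap (AwR k l m) (Localization.Away (MvPolynomial.X m : MvPolynomial (Fin (l + 1)) k)))

theorem psi_mk (m : Fin (l + 1)) (n : ℕ) (a) (ha) :
    psi m (HomogeneousLocalization.Away.mk (gr k l) (X_mem m) n a ha) = psi0 m a := by
  simp only [psi, RingHom.comp_apply, HomogeneousLocalization.algebraMap_apply,
    HomogeneousLocalization.Away.val_mk, Localization.mk_eq_mk']
  rw [IsLocalization.Away.lift, IsLocalization.lift_mk'_spec]
  simp [psi0_X]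

theorem psi_cc (m : Fin (l + 1)) (x : k) : psi m (cc m x) = MvPolynomial.C x := by
  have : cc m x = HomogeneousLocalization.Away.mk (gr k l) (X_mem m) 0 (MvPolynomial.C x)
      (by simp) := by
    ext
    simp [cc, HomogeneousLocalization.fromZeroRingHom]
    rfl
  rw [this, psi_mk]
  simp [psi0]

theorem psi_uu (m i : Fin (l + 1)) : psi (k := k) m (uu m i) = vv m i := by
  rw [uu, psi_mk]; simp [psi0]

theorem mk_eq (m : Fin (l + 1)) (n : ℕ) (a) (ha) :
    HomogeneousLocalization.Away.mk (gr k l) (X_mem m) n a ha =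
      MvPolynomial.eval₂Hom (cc m) (uu m) a := by
  have ha' : a.IsHomogeneous n := by simpa using ha
  let S := Localization.Away (MvPolynomial.X m : MvPolynomial (Fin (l + 1)) k)
  let V : AwR k l m →+* S := algebraMap _ _
  apply HomogeneousLocalization.val_injective
  rw [HomogeneousLocalization.Away.val_mk, Localization.mk_eq_mk']
  change _ = V _
  symm
  rw [IsLocalization.eq_mk'_iff_mul_eq]
  have h1 : ∀ i, algebraMap (MvPolynomial (Fin (l + 1)) k) S (MvPolynomial.X i) =
      algebraMap (MvPolynomial (Fin (l + 1)) k) S (MvPolynomial.X m) * V (uu m i) := by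
    intro i
    change _ = _ * (uu m i).val
    rw [uu, HomogeneousLocalization.Away.val_mk, Localization.mk_eq_mk', mul_comm]
    have := IsLocalization.mk'_spec S (MvPolynomial.X i)
      (⟨(MvPolynomial.X m : MvPolynomial (Fin (l + 1)) k) ^ 1, by use 1⟩ : Submonoid.powers _)
    simp only [pow_one] at this ⊢
    exact this.symm
  have h2 := hom_scale (V.comp (cc m)) (algebraMap (MvPolynomial (Fin (l + 1)) k) S (MvPolynomial.X m)) (fun i => V (uu m i)) ha'
  have h3 : MvPolynomial.eval₂Hom (V.comp (cc m)) (fun i => V (uu m i)) a =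
      V (MvPolynomial.eval₂Hom (cc m) (uu m) a) := by
    simp only [MvPolynomial.coe_eval₂Hom]
    rw [MvPolynomial.eval₂_comp_left V]
    rfl
  have h4 : MvPolynomial.eval₂Hom (V.comp (cc m)) 
      (fun i => algebraMap (MvPolynomial (Fin (l + 1)) k) S (MvPolynomial.X m) * V (uu m i))
      = algebraMap _ S := by
    apply MvPolynomial.ringHom_ext
    · intro r
      simp only [MvPolynomial.eval₂Hom_C]
      change (cc m r).val = _
      simp [cc, HomogeneousLocalization.fromZeroRingHom]
      rw [← Localization.mk_one_eq_algebraMap]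
      rfl
    · intro i
      rw [MvPolynomial.eval₂Hom_X']
      exact (h1 i).symm
  rw [h3, h4] at h2
  rw [h2]; simp [mul_comm]

/-- section -/
def ss (m : Fin (l + 1)) : MvPolynomial (Fin m) k →+* AwR k l m :=
  MvPolynomial.eval₂Hom (cc m) (fun j => uu m (Fin.castLE m.2.le j))

theorem psi_ss (m : Fin (l + 1)) (x) : psi (k := k) m (ss m x) = x := by
  have : (psi (k := k) m).comp (ss m) = RingHom.id _ := by
    apply MvPolynomial.ringHom_ext
    · intro r; simp [ss, psi_cc]
    · intro i
      simp only [ss, RingHom.comp_apply, MvPolynomial.eval₂Hom_X', psi_uu, vv]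
      have : Fin.castLE m.2.le i < m := i.2
      simp [this]
  exact DFunLike.congr_fun this x

theorem psi_surj (m : Fin (l + 1)) : Function.Surjective (psi (k := k) m) :=
  fun x => ⟨_, psi_ss m x⟩

theorem uu_self (m : Fin (l + 1)) : uu (k := k) m m = 1 := by
  apply HomogeneousLocalization.val_injective
  rw [uu, HomogeneousLocalization.Away.val_mk, HomogeneousLocalization.val_one]
  simp only [pow_one]
  exact Localization.mk_self
    (⟨MvPolynomial.X m, by use 1; simp⟩ : Submonoid.powers (MvPolynomial.X m : MvPolynomial (Fin (l + 1)) k))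

theorem ker_le (m : Fin (l + 1)) (q : Ideal (AwR k l m)) (hq : ∀ i, m < i → uu m i ∈ q) :
    RingHom.ker (psi m) ≤ q := by
  intro x hx
  obtain ⟨n, a, ha, rfl⟩ := HomogeneousLocalization.Away.mk_surjective (gr k l) (X_mem m) x
  rw [RingHom.mem_ker, psi_mk] at hx
  rw [mk_eq]
  have : (Ideal.Quotient.mk q).comp (MvPolynomial.eval₂Hom (cc m) (uu m)) =
      ((Ideal.Quotient.mk q).comp (ss m)).comp (psi0 m) := by
    apply MvPolynomial.ringHom_ext
    · intro r; simp [ss, psi0]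
    · intro i
      simp only [ss, psi0, RingHom.comp_apply, MvPolynomial.eval₂Hom_X', vv]
      rcases lt_trichotomy i m with h | h | h
      · simp [h]
      · subst h; simp [uu_self]
      · simp [h.not_gt, h.ne', Ideal.Quotient.eq_zero_iff_mem, hq i h]
  rw [← Ideal.Quotient.eq_zero_iff_mem]
  have h2 := DFunLike.congr_fun this a
  simp only [RingHom.comp_apply] at h2
  rw [h2, hx, map_zero, map_zero]

/-- standard open -/
def Dp (i : Fin (l + 1)) : (ProjSpace k l).Opens :=
  Proj.basicOpen (gr k l) (MvPolynomial.X i)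

/-- chart -/
def chart (m : Fin (l + 1)) : Spec (CommRingCat.of (AwR k l m)) ⟶ ProjSpace k l :=
  Proj.awayι (gr k l) (MvPolynomial.X m) (X_mem m) one_pos

instance (m : Fin (l + 1)) : IsOpenImmersion (chart (k := k) m) :=
  inferInstanceAs (IsOpenImmersion (Proj.awayι (gr k l) (MvPolynomial.X m) (X_mem m) one_pos))

theorem range_chart (m : Fin (l + 1)) : Set.range (chart (k := k) m) = (Dp (k := k) m : Set (ProjSpace k l)) :=
  congrArg (fun O : (Proj (gr k l)).Opens => (O : Set (Proj (gr k l))))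
    (Proj.opensRange_awayι (gr k l) (MvPolynomial.X m) (X_mem m) one_pos)

theorem chart_mem (m i : Fin (l + 1)) (x) : chart (k := k) m x ∈ Dp i ↔ uu m i ∉ x.asIdeal := by
  have h := Proj.awayι_preimage_basicOpen (gr k l) (X_mem m) one_pos (X_mem i) one_pos
  have h2 : chart (k := k) m x ∈ Dp i ↔
    x ∈ PrimeSpectrum.basicOpen (HomogeneousLocalization.Away.isLocalizationElem (X_mem (k := k) m) (X_mem i)) := by
    rw [← h]; rfl
  refine h2.trans ((PrimeSpectrum.mem_basicOpen _ _).trans ?_)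
  have : HomogeneousLocalization.Away.isLocalizationElem (X_mem (k := k) m) (X_mem i) = uu m i := by
    apply HomogeneousLocalization.val_injective
    simp [uu, HomogeneousLocalization.Away.isLocalizationElem]
  rw [this]

theorem chart_str (m : Fin (l + 1)) :
    chart (k := k) m ≫ ProjSpace.str k l = Spec.map (CommRingCat.ofHom (cc m)) := by
  have h := Proj.awayι_toSpecZero (gr k l) (MvPolynomial.X m) (X_mem m) one_pos
  unfold ProjSpace.str chart
  erw [reassoc_of% h]
  rw [← Spec.map_comp]
  rfl

/-- the stratum -/
def stratum (m : Fin (l + 1)) : Spec (CommRingCat.of (MvPolynomial (Fin m) k)) ⟶ ProjSpace k l :=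
  Spec.map (CommRingCat.ofHom (psi m)) ≫ chart m

instance (m : Fin (l + 1)) : IsImmersion (stratum (k := k) m) := by
  have : IsClosedImmersion (Spec.map (CommRingCat.ofHom (psi (k := k) m))) :=
    IsClosedImmersion.spec_of_surjective _ (psi_surj m)
  unfold stratum
  infer_instance

theorem stratum_str (m : Fin (l + 1)) : stratum (k := k) m ≫ ProjSpace.str k l = affStr k m := by
  rw [stratum, Category.assoc, chart_str, ← Spec.map_comp]
  congr 1
  refine CommRingCat.hom_ext (RingHom.ext fun x => ?_)
  exact psi_cc m x

/-- open exhaustion -/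
def OO (k : Type u) [Field k] (l m : ℕ) : (ProjSpace k l).Opens :=
  ⨆ i : {i : Fin (l + 1) // m ≤ i}, Dp i.1

theorem mem_OO {m : ℕ} {x : ProjSpace k l} : x ∈ OO k l m ↔ ∃ i : Fin (l + 1), m ≤ i ∧ x ∈ Dp i := by
  simp [OO]

theorem OO_zero : OO k l 0 = ⊤ := by
  have := Proj.iSup_basicOpen_eq_top' (gr k l) (fun i => (MvPolynomial.X i)) (fun i => ⟨1, X_mem i⟩) (by
    rw [eq_top_iff]
    intro x _
    induction x using MvPolynomial.induction_on with
    | C a =>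
      have := Subalgebra.algebraMap_mem (Algebra.adjoin (gr k l 0) (Set.range fun i : Fin (l + 1) =>
        (MvPolynomial.X i : MvPolynomial (Fin (l + 1)) k))) ⟨MvPolynomial.C a, MvPolynomial.isHomogeneous_C _ _⟩
      exact this
    | add p q hp hq => exact add_mem (hp trivial) (hq trivial)
    | mul_X p i hp => exact mul_mem (hp trivial) (Algebra.subset_adjoin ⟨i, rfl⟩))
  rw [eq_top_iff]
  intro x _
  have hx : x ∈ (⨆ i : Fin (l + 1), Dp (k := k) i) := by
    have h' : (⨆ i : Fin (l + 1), Dp (k := k) i) = ⊤ := this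
    rw [h']; trivial
  rw [TopologicalSpace.Opens.mem_iSup] at hx
  obtain ⟨i, hi⟩ := hx
  exact mem_OO.2 ⟨i, Nat.zero_le _, hi⟩

theorem OO_last : OO k l (l + 1) = ⊥ := by
  rw [eq_bot_iff]
  intro x hx
  obtain ⟨i, hi, _⟩ := mem_OO.1 hx
  have := i.2
  omega

theorem OO_succ_le (m : ℕ) : OO k l (m + 1) ≤ OO k l m := by
  intro x hx
  obtain ⟨i, hi, h⟩ := mem_OO.1 hx
  exact mem_OO.2 ⟨i, by omega, h⟩

theorem range_stratum (m : Fin (l + 1)) : Set.range (stratum (k := k) m) =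
    (OO k l m : Set (ProjSpace k l)) \ OO k l (m + 1) := by
  have hr : Set.range (Spec.map (CommRingCat.ofHom (psi (k := k) m))) =
      PrimeSpectrum.zeroLocus (RingHom.ker (psi (k := k) m)) :=
    range_comap_of_surjective _ (psi m) (psi_surj m)
  ext y
  constructor
  · rintro ⟨z, rfl⟩
    have hz : Spec.map (CommRingCat.ofHom (psi (k := k) m)) z ∈
      PrimeSpectrum.zeroLocus (RingHom.ker (psi (k := k) m) : Set (AwR k l m)) := by
      rw [← hr]; exact ⟨z, rfl⟩
    have e : stratum m z = chart m (Spec.map (CommRingCat.ofHom (psi (k := k) m)) z) := rfl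
    rw [e]
    generalize Spec.map (CommRingCat.ofHom (psi (k := k) m)) z = w at hz
    refine ⟨mem_OO.2 ⟨m, le_rfl, ?_⟩, fun h => ?_⟩
    · rw [← SetLike.mem_coe, ← range_chart]; exact ⟨_, rfl⟩
    · obtain ⟨i, hi, h⟩ := mem_OO.1 h
      have hmi : m < i := Fin.lt_def.2 (by omega)
      rw [chart_mem] at h
      refine h (hz ?_)
      change psi m (uu m i) = 0
      rw [psi_uu, vv, dif_neg hmi.not_gt, if_neg hmi.ne']
  · rintro ⟨h1, h2⟩
    have hy : y ∈ Dp m := by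
      obtain ⟨i, hi, h⟩ := mem_OO.1 h1
      by_cases him : i = m
      · rwa [← him]
      · refine absurd (mem_OO.2 ⟨i, ?_, h⟩) h2
        have : (i : ℕ) ≠ m := fun h => him (Fin.ext h)
        omega
    rw [← SetLike.mem_coe, ← range_chart] at hy
    obtain ⟨w, rfl⟩ := hy
    have hw : w ∈ Set.range (Spec.map (CommRingCat.ofHom (psi (k := k) m))) := by
      rw [hr]
      refine ker_le m w.asIdeal fun i hi => ?_
      by_contra hc
      exact h2 (mem_OO.2 ⟨i, hi, (chart_mem m i w).2 hc⟩)
    obtain ⟨z, rfl⟩ := hw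
    exact ⟨z, rfl⟩

end strata

end ConvAux

namespace ConvAux

variable {k : Type u} [Field k] {l : ℕ}

theorem tower_imm {T P : Variety k} {a : P.toScheme ⟶ T.toScheme}
    {q : P.toScheme ⟶ ProjSpace k l} (h : IsPullback a q T.str (ProjSpace.str k l))
    (ha : a ≫ T.str = P.str) (m : Fin (l + 1)) :
    ∃ i : (tower T m).toScheme ⟶ P.toScheme, IsImmersion i ∧ i ≫ P.str = (tower T m).str ∧
      Set.range i = q ⁻¹' Set.range (stratum (k := k) m) := by
  obtain ⟨a', b, hab, hs⟩ := tower_pb T (m : ℕ)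
  rw [← stratum_str m] at hab
  have h1 := IsPullback.of_right' hab h
  refine ⟨_, MorphismProperty.of_isPullback (P := @IsImmersion) h1.flip inferInstance, ?_, ?_⟩
  · rw [← ha, IsPullback.lift_fst_assoc, hs]
  · have := Scheme.image_preimage_eq_of_isPullback h1.flip Set.univ
    simpa using this

theorem dim_step {T P : Variety k} {N : ℕ} (hP : P.dim ≤ (N : WithBot ℕ∞))
    {a : P.toScheme ⟶ T.toScheme}
    {q : P.toScheme ⟶ ProjSpace k l} (h : IsPullback a q T.str (ProjSpace.str k l))
    (ha : a ≫ T.str = P.str) (m : Fin (l + 1)) :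
    ∃ hm : (tower T m).dim ≤ (N : WithBot ℕ∞),
      oc hP (q ⁻¹ᵁ OO k l m) = oc hP (q ⁻¹ᵁ OO k l (m + 1)) + K0le.cls N (tower T m) hm := by
  obtain ⟨i, hi, hi', hr⟩ := tower_imm h ha m
  have hm : (tower T m).dim ≤ (N : WithBot ℕ∞) := (dim_le_of_immersion i).trans hP
  refine ⟨hm, oc_cut hP hm ?_ i hi' ?_⟩
  · intro x hx
    exact OO_succ_le (k := k) (l := l) m hx
  · rw [hr, range_stratum]; rfl

theorem tail_mem {T P : Variety k} {N : ℕ} (hP : P.dim ≤ (N : WithBot ℕ∞))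
    {a : P.toScheme ⟶ T.toScheme}
    {q : P.toScheme ⟶ ProjSpace k l} (h : IsPullback a q T.str (ProjSpace.str k l))
    (ha : a ≫ T.str = P.str) (j : ℕ) :
    ∀ m : ℕ, m + j = l + 1 → 1 ≤ m → oc hP (q ⁻¹ᵁ OO k l m) ∈ LI k (N - 1) N := by
  induction j with
  | zero =>
    intro m hm _
    obtain rfl : m = l + 1 := by omega
    have : q ⁻¹ᵁ OO k l (l + 1) = ⊥ := by rw [OO_last]; rfl
    rw [this, oc_bot]
    exact zero_mem _
  | succ j ih =>
    intro m hm h1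
    obtain ⟨hd, he⟩ := dim_step hP h ha ⟨m, by omega⟩
    have he' : oc hP (q ⁻¹ᵁ OO k l m) =
      oc hP (q ⁻¹ᵁ OO k l (m + 1)) + K0le.cls N (tower T m) hd := he
    rw [he']
    refine add_mem (ih (m + 1) (by omega) (by omega)) ?_
    obtain ⟨m, rfl⟩ : ∃ m', m = m' + 1 := ⟨m - 1, by omega⟩
    refine AddSubgroup.subset_closure ⟨tower T m, tower T (m + 1), dim_prodLine _ hd, hd,
      ⟨line k, isAffLine_line, isProductOf_prodLine _⟩, rfl⟩

theorem trivial_bundle {T P : Variety k} {N : ℕ} (hT : T.dim ≤ (N : WithBot ℕ∞))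
    (hP : P.dim ≤ (N : WithBot ℕ∞)) {a : P.toScheme ⟶ T.toScheme}
    {q : P.toScheme ⟶ ProjSpace k l} (h : IsPullback a q T.str (ProjSpace.str k l))
    (ha : a ≫ T.str = P.str) :
    K0le.cls N T hT - K0le.cls N P hP ∈ LI k (N - 1) N := by
  obtain ⟨hd, he⟩ := dim_step hP h ha ⟨0, by omega⟩
  have he' : oc hP (q ⁻¹ᵁ OO k l 0) = oc hP (q ⁻¹ᵁ OO k l (0 + 1)) + K0le.cls N T hT := he
  have h0 : q ⁻¹ᵁ OO k l 0 = ⊤ := by rw [OO_zero]; rfl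
  rw [h0, oc_top] at he'
  have h1 := tail_mem hP h ha l (0 + 1) (by omega) (by omega)
  rw [he']
  simpa using neg_mem h1

/-- trivializing opens -/
def Triv (l : ℕ) {E Z : Variety k} (p : E.toScheme ⟶ Z.toScheme) (W : Z.toScheme.Opens) : Prop :=
  ∃ q : (p ⁻¹ᵁ W).toScheme ⟶ ProjSpace k l,
    IsPullback (p ∣_ W) q (W.ι ≫ Z.str) (ProjSpace.str k l)

theorem Triv.mono {E Z : Variety k} {p : E.toScheme ⟶ Z.toScheme} {W W' : Z.toScheme.Opens}
    (h : Triv l p W) (hW : W' ≤ W) : Triv l p W' := by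
  obtain ⟨q, hq⟩ := h
  have h1 := isPullback_morphismRestrict p W'
  rw [← Scheme.homOfLE_ι _ hW] at h1
  have h2 := IsPullback.of_right' h1.flip (isPullback_morphismRestrict p W).flip
  have h3 := h2.flip.paste_vert hq
  rw [Scheme.homOfLE_ι_assoc] at h3
  exact ⟨_, h3⟩

variable {N : ℕ} {E Z : Variety k} (hE : E.dim ≤ (N : WithBot ℕ∞)) (hZ : Z.dim ≤ (N : WithBot ℕ∞))

theorem Triv.mem {p : E.toScheme ⟶ Z.toScheme} (hp : p ≫ Z.str = E.str) {W : Z.toScheme.Opens}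
    (h : Triv l p W) : oc hZ W - oc hE (p ⁻¹ᵁ W) ∈ LI k (N - 1) N := by
  obtain ⟨q, hq⟩ := h
  refine trivial_bundle (T := res Z W) (P := res E (p ⁻¹ᵁ W)) (res_dim hZ W)
    (res_dim hE (p ⁻¹ᵁ W)) (a := p ∣_ W) hq ?_
  change p ∣_ W ≫ W.ι ≫ Z.str = (p ⁻¹ᵁ W).ι ≫ E.str
  rw [morphismRestrict_ι_assoc, hp]

theorem finset_mem {p : E.toScheme ⟶ Z.toScheme} (hp : p ≫ Z.str = E.str)
    (W : Z.toScheme → Z.toScheme.Opens) (hW : ∀ z, Triv l p (W z)) (t : Finset Z.toScheme) :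
    oc hZ (t.sup W) - oc hE (p ⁻¹ᵁ (t.sup W)) ∈ LI k (N - 1) N := by
  classical
  induction t using Finset.induction_on with
  | empty =>
    have : p ⁻¹ᵁ (⊥ : Z.toScheme.Opens) = ⊥ := rfl
    rw [Finset.sup_empty, this, oc_bot, oc_bot, sub_zero]
    exact zero_mem _
  | insert z t _ ih =>
    rw [Finset.sup_insert]
    generalize t.sup W = O at ih
    have e1 : p ⁻¹ᵁ (W z ⊔ O) = (p ⁻¹ᵁ W z) ⊔ (p ⁻¹ᵁ O) := rfl
    have e2 : p ⁻¹ᵁ (W z ⊓ O) = (p ⁻¹ᵁ W z) ⊓ (p ⁻¹ᵁ O) := rfl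
    have h1 := (hW z).mem hE hZ hp
    have h2 := ((hW z).mono (W' := W z ⊓ O) inf_le_left).mem hE hZ hp
    have h3 := sub_mem (add_mem h1 ih) h2
    rw [e1, oc_mv, oc_mv, ← e2]
    convert h3 using 1
    abel

theorem bundle_mem {p : E.toScheme ⟶ Z.toScheme} (hp : p ≫ Z.str = E.str)
    (hb : IsProjBundle l p) : K0le.cls N Z hZ - K0le.cls N E hE ∈ LI k (N - 1) N := by
  have hb' : ∀ z : Z.toScheme, ∃ W : Z.toScheme.Opens, z ∈ W ∧ Triv l p W := by
    intro z
    obtain ⟨W, hz, e, he⟩ := hb z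
    refine ⟨W, hz, e.hom ≫ pullback.snd _ _, ?_⟩
    refine (IsPullback.of_hasPullback (W.ι ≫ Z.str) (ProjSpace.str k l)).of_iso e.symm (Iso.refl _)
      (Iso.refl _) (Iso.refl _) ?_ ?_ ?_ ?_
    · rw [← he]; simp
    · simp
    · simp
    · simp
  choose W hz hW using hb'
  obtain ⟨t, ht⟩ := isCompact_univ.elim_nhds_subcover (fun z => (W z : Set Z.toScheme))
    (fun z _ => (W z).2.mem_nhds (hz z))
  have htop : t.sup W = ⊤ := by
    rw [eq_top_iff]
    intro x _
    have := ht.2 (Set.mem_univ x)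
    simp only [Set.mem_iUnion] at this
    obtain ⟨z, hzt, hx⟩ := this
    exact (Finset.le_sup (f := W) hzt : W z ≤ t.sup W) hx
  have h := finset_mem hE hZ hp W hW t
  have e0 : p ⁻¹ᵁ (⊤ : Z.toScheme.Opens) = ⊤ := rfl
  rwa [htop, e0, oc_top, oc_top] at h

end ConvAux

/-- If `φ : X ⇢ Y` between smooth projective `n`-dimensional varieties
is represented by `e : U ≅ V`, `Z = X ∖ U` has dimension at most `n - 1 - ℓ`, and
`E = Y ∖ V` is a Zariski-locally trivial `ℙ^ℓ`-bundle over `Z` with `ℓ ≥ 1`, then `φ` is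
convenient: `[X ∖ U] - [Y ∖ V]` lies in the image of
`·L : K_0(V_k^{(n-2)}) → K_0(V_k^{(n-1)})`. -/
theorem convenient_of_projBundle_complement (k : Type u) [Field k] (n ℓ : ℕ)
    (hℓ : 1 ≤ ℓ) (X Y : Variety k)
    (hXs : IsSmoothVar X) (hYs : IsSmoothVar Y)
    (hXp : IsProjectiveVar X) (hYp : IsProjectiveVar Y)
    (hXi : IrreducibleSpace X.toScheme) (hYi : IrreducibleSpace Y.toScheme)
    (hXd : X.dim = (n : WithBot ℕ∞)) (hYd : Y.dim = (n : WithBot ℕ∞))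
    (U : X.toScheme.Opens) (V : Y.toScheme.Opens)
    (hU : Dense (U : Set X.toScheme)) (hV : Dense (V : Set Y.toScheme))
    (e : U.toScheme ≅ V.toScheme) (he : e.hom ≫ V.ι ≫ Y.str = U.ι ≫ X.str)
    -- `Zc` realizes `X ∖ U` and `Ec` realizes `Y ∖ V`:
    (Zc Ec : Variety k) (hZc : IsComplementOf Zc X U) (hEc : IsComplementOf Ec Y V)
    (hZdim : Zc.dim ≤ ((n - 1 - ℓ : ℕ) : WithBot ℕ∞))
    -- `Ec` is a `ℙ^ℓ`-bundle over `Zc`: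
    (p : Ec.toScheme ⟶ Zc.toScheme) (hp : p ≫ Zc.str = Ec.str)
    (hbundle : IsProjBundle ℓ p)
    (hZ1 : Zc.dim ≤ ((n - 1 : ℕ) : WithBot ℕ∞))
    (hE1 : Ec.dim ≤ ((n - 1 : ℕ) : WithBot ℕ∞)) :
    InMulLImage (n - 2) (n - 1)
      (K0le.cls (n - 1) Zc hZ1 - K0le.cls (n - 1) Ec hE1) := by
  have h := ConvAux.bundle_mem hE1 hZ1 hp hbundle
  have h2 : n - 2 = n - 1 - 1 := by omega
  rw [h2]
  exact ConvAux.inMulLImage_of_mem h
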